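/- Let F ∈ R^{l×m} with l < m and rank r (1 ≤ r ≤ l), and suppose J_r(F) = R. Then there exists a square matrix F'_1 ∈ R^{r×r} such that F is equivalent to the l×m block matrix with F'_1 in the upper-left r×r corner and zeros elsewhere; moreover det(F'_1) is associated to d_r(F), and J_k(F'_1) = J_k(F) for every k = 1, …, r. -/

import Mathlib

open MvPolynomial Matrix

section Defs

variable {A : Type*} [CommRing A]

/-- The set of all `k × k` minors of a matrix. -/
def minorsSet {l m : ℕ} (F : Matrix (Fin l) (Fin m) A) (k : ℕ) : Set A :=
  { p | ∃ (r : Fin k ↪ Fin l) (c : Fin k ↪ Fin m), p = (F.submatrix ⇑r ⇑c).det }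

/-- `d` is a greatest common divisor of the `k × k` minors of `F`. -/
def IsGcdMinors {l m : ℕ} (F : Matrix (Fin l) (Fin m) A) (k : ℕ) (d : A) : Prop :=
  (∀ p ∈ minorsSet F k, d ∣ p) ∧ ∀ e : A, (∀ p ∈ minorsSet F k, e ∣ p) → e ∣ d

/-- The ideal generated by the `k × k` reduced minors of `F`, relative to a gcd `d`
of the `k × k` minors (the reduced minors are the `v` with `d * v` a minor). -/
def reducedIdeal {l m : ℕ} (F : Matrix (Fin l) (Fin m) A) (k : ℕ) (d : A) : Ideal A :=
  Ideal.span { v : A | d * v ∈ minorsSet F k }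

/-- `J_k(F) = R`: the `k × k` reduced minors of `F` generate the unit ideal. -/
def JkUnit {l m : ℕ} (F : Matrix (Fin l) (Fin m) A) (k : ℕ) : Prop :=
  ∃ d : A, IsGcdMinors F k d ∧ reducedIdeal F k d = ⊤

/-- `F` has rank `r`: some `r × r` minor is nonzero and all `(r+1) × (r+1)` minors vanish. -/
def HasRank {l m : ℕ} (F : Matrix (Fin l) (Fin m) A) (r : ℕ) : Prop :=
  (∃ p ∈ minorsSet F r, p ≠ 0) ∧ ∀ p ∈ minorsSet F (r + 1), p = 0

/-- Equivalence of matrices: `F₁ = U * F₂ * V` for unimodular `U`, `V`. -/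
def MatEquiv {l m : ℕ} (F₁ F₂ : Matrix (Fin l) (Fin m) A) : Prop :=
  ∃ (U : Matrix (Fin l) (Fin l) A) (V : Matrix (Fin m) (Fin m) A),
    IsUnit U.det ∧ IsUnit V.det ∧ F₁ = U * F₂ * V

/-- The rectangular diagonal matrix with diagonal entries `Φ`. -/
def smithDiag {l m : ℕ} (Φ : Fin l → A) : Matrix (Fin l) (Fin m) A :=
  Matrix.of fun i j => if (i : ℕ) = (j : ℕ) then Φ i else 0

/-- `F` (of rank `r`) is equivalent to its Smith form: there are diagonal entries `Φ` such that
for each `i ≤ r` the product `Φ_1 ⋯ Φ_i` is a gcd of the `i × i` minors of `F`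
(i.e. `Φ_i = d_i(F)/d_{i-1}(F)`), `Φ_i = 0` for `i > r`, and `F` is equivalent to
the diagonal matrix with entries `Φ`. -/
def SmithEquivAt {l m : ℕ} (F : Matrix (Fin l) (Fin m) A) (r : ℕ) : Prop :=
  ∃ Φ : Fin l → A,
    (∀ i : Fin l, (i : ℕ) < r →
      IsGcdMinors F ((i : ℕ) + 1) (∏ j ∈ Finset.Iic i, Φ j)) ∧
    (∀ i : Fin l, r ≤ (i : ℕ) → Φ i = 0) ∧
    MatEquiv F (smithDiag Φ)

/-- `F` is equivalent to its Smith form. -/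
def EquivToSmith {l m : ℕ} (F : Matrix (Fin l) (Fin m) A) : Prop :=
  ∃ r : ℕ, HasRank F r ∧ SmithEquivAt F r

end Defs

/-!
Let `d` be the gcd of the `r × r` minors of a rank `r` matrix `F`. Every nonzero `r × r` minor
`d * v` gives, by the bordered determinant identity, a matrix `E` with `E * F = v • F` and
`d • E` a right multiple of `F`. When the `v` generate the unit ideal, a linear combination of these
matrices is an idempotent `E` with `E * F = F`, that is, the saturation of the column module of `F`
is a direct summand. By the Quillen-Suslin theorem the summand and its complement are free, and
bases of the two form a unimodular matrix. Doing the same for `Fᵀ` brings `F` to block form, and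
Cauchy-Binet compares the minors.

Quillen-Suslin is proved by induction on the number of variables, a Nagata change of variables
turning any given nonzero polynomial into a monic one over one variable less. A projective module
`P` over `A[X]` contains a free submodule `N` with `P ⧸ N` killed by a monic polynomial, hence
finite over `A`. The quotient is then projective, hence free, over `A`, so that the characteristic
sequence of multiplication by `X` resolves it by free `A[X]`-modules. Schanuel's lemma makes `P`
stably free, and Suslin's monic trick for unimodular rows makes it free.
-/

/-- `GLEquivalent v w`: the vectors `v` and `w` lie in the same orbit of `GL ι S` on `ι → S`. -/
def GLEquivalent {ι S : Type*} [Fintype ι] [DecidableEq ι] [CommRing S] (v w : ι → S) : Prop :=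
  ∃ g : (Matrix ι ι S)ˣ, (g : Matrix ι ι S) *ᵥ v = w

/-- A unimodular vector: its coordinates generate the unit ideal. -/
def IsUnimodular {ι S : Type*} [Fintype ι] [CommRing S] (v : ι → S) : Prop :=
  ∃ w : ι → S, w ⬝ᵥ v = 1

section GLEquivalent

variable {ι κ S T : Type*} [Fintype ι] [DecidableEq ι] [Fintype κ] [DecidableEq κ]
  [CommRing S] [CommRing T]

theorem ringHom_comp_single_one {ι S T : Type*} [DecidableEq ι] [CommRing S] [CommRing T]
    (φ : S →+* T) (i : ι) : φ ∘ Pi.single i 1 = Pi.single i 1 := by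
  ext j
  simp [Pi.single_apply, apply_ite φ]

namespace GLEquivalent

@[refl]
theorem refl (v : ι → S) : GLEquivalent v v := ⟨1, by simp⟩

theorem of_eq {v w : ι → S} (h : v = w) : GLEquivalent v w := h ▸ refl v

@[symm]
theorem symm {v w : ι → S} : GLEquivalent v w → GLEquivalent w v := by
  rintro ⟨g, rfl⟩
  exact ⟨g⁻¹, by rw [mulVec_mulVec, Units.inv_mul, one_mulVec]⟩

@[trans]
theorem trans {u v w : ι → S} : GLEquivalent u v → GLEquivalent v w → GLEquivalent u w := by
  rintro ⟨g, rfl⟩ ⟨h, rfl⟩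
  exact ⟨h * g, by rw [Units.val_mul, mulVec_mulVec]⟩

theorem map (φ : S →+* T) {v w : ι → S} :
    GLEquivalent v w → GLEquivalent (φ ∘ v) (φ ∘ w) := by
  rintro ⟨g, rfl⟩
  refine ⟨Units.map φ.mapMatrix.toMonoidHom g, funext fun i => ?_⟩
  exact (φ.map_mulVec _ _ i).symm

theorem apply_linearEquiv (e : (ι → S) ≃ₗ[S] (ι → S)) (v : ι → S) : GLEquivalent v (e v) :=
  ⟨⟨LinearMap.toMatrix' e, LinearMap.toMatrix' e.symm,
    by rw [← LinearMap.toMatrix'_comp]; simp, by rw [← LinearMap.toMatrix'_comp]; simp⟩,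
    LinearMap.toMatrix'_mulVec _ _⟩

theorem exists_linearEquiv {v w : ι → S} :
    GLEquivalent v w → ∃ e : (ι → S) ≃ₗ[S] (ι → S), e v = w := by
  rintro ⟨g, rfl⟩
  exact ⟨Matrix.toLin'OfInv g.inv_mul g.mul_inv, Matrix.toLin'_apply _ _⟩

theorem comp_perm (σ : Equiv.Perm ι) (v : ι → S) : GLEquivalent v (v ∘ σ) :=
  apply_linearEquiv (LinearEquiv.funCongrLeft S S σ) v

theorem comp_equiv (e : κ ≃ ι) {v w : ι → S} (h : GLEquivalent v w) :
    GLEquivalent (v ∘ e) (w ∘ e) := by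
  obtain ⟨g, rfl⟩ := h.exists_linearEquiv
  simpa [LinearEquiv.funCongrLeft, LinearMap.funLeft, Function.comp_assoc] using
    apply_linearEquiv ((LinearEquiv.funCongrLeft S S e).symm ≪≫ₗ g ≪≫ₗ
      LinearEquiv.funCongrLeft S S e) (v ∘ e)

theorem of_comp_equiv (e : κ ≃ ι) {v w : ι → S} (h : GLEquivalent (v ∘ e) (w ∘ e)) :
    GLEquivalent v w := by
  simpa [Function.comp_assoc] using h.comp_equiv e.symm

theorem of_comp_ringEquiv (E : S ≃+* T) {v w : ι → S} (h : GLEquivalent (E ∘ v) (E ∘ w)) :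
    GLEquivalent v w := by
  simpa [Function.comp_def] using h.map (E.symm : T →+* S)

theorem add_smul_of_apply_eq_zero (f : Module.Dual S (ι → S)) {u : ι → S} (hu : f u = 0)
    (v : ι → S) : GLEquivalent v (v + f v • u) :=
  apply_linearEquiv (LinearEquiv.transvection hu) v

theorem single_single (i j : ι) : GLEquivalent (Pi.single i (1 : S)) (Pi.single j 1) := by
  refine (comp_perm (Equiv.swap j i) _).trans (of_eq (funext fun k => ?_))
  simp [Pi.single_apply, Equiv.swap_apply_eq_iff]

theorem units_smul_coord (i : ι) (u : Sˣ) (v : ι → S) :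
    GLEquivalent v (Function.update v i (u * v i)) := by
  let d : (ι → S)ˣ := MulEquiv.piUnits.symm (Function.update 1 i u)
  refine ⟨Units.map (diagonalRingHom ι S).toMonoidHom d, funext fun j => ?_⟩
  obtain rfl | hj := eq_or_ne j i
  · simp [d, mulVec_diagonal]
  · simp [d, mulVec_diagonal, hj]

theorem single_of_isUnit {v : ι → S} {i : ι} (h : IsUnit (v i)) :
    GLEquivalent v (Pi.single i 1) := by
  obtain ⟨u, hu⟩ := h
  refine (units_smul_coord i u⁻¹ v).trans ?_
  set v' := Function.update v i (↑u⁻¹ * v i)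
  have hv' : v' i = 1 := by simp [v', ← hu]
  convert add_smul_of_apply_eq_zero (LinearMap.proj i) (u := Pi.single i 1 - v')
    (by simp [hv']) v' using 1
  simp [hv']

theorem sumElim {v w : ι → S} (h : GLEquivalent v w) (y : κ → S) :
    GLEquivalent (Sum.elim v y) (Sum.elim w y) := by
  obtain ⟨e, rfl⟩ := h.exists_linearEquiv
  have := apply_linearEquiv ((LinearEquiv.sumArrowLequivProdArrow ι κ S S) ≪≫ₗ
    e.prodCongr (LinearEquiv.refl S (κ → S)) ≪≫ₗ
    (LinearEquiv.sumArrowLequivProdArrow ι κ S S).symm) (Sum.elim v y)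
  refine this.trans (of_eq ?_)
  ext (i | j) <;> simp [LinearEquiv.sumArrowLequivProdArrow, Equiv.sumArrowEquivProdArrow]

end GLEquivalent

end GLEquivalent

namespace IsUnimodular

variable {ι κ S T : Type*} [Fintype ι] [Fintype κ] [CommRing S] [CommRing T]

theorem of_linearMap {v : ι → S} (f : (ι → S) →ₗ[S] S) (hf : f v = 1) :
    IsUnimodular v := by
  classical
  refine ⟨fun i => f (Pi.single i 1), ?_⟩
  conv_rhs => rw [← hf, pi_eq_sum_univ' v, map_sum]
  simp [dotProduct, mul_comm]

theorem map {v : ι → S} (h : IsUnimodular v) (φ : S →+* T) : IsUnimodular (φ ∘ v) := by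
  obtain ⟨w, hw⟩ := h
  exact ⟨φ ∘ w, by rw [← φ.map_dotProduct, hw, map_one]⟩

theorem comp_equiv {v : ι → S} (h : IsUnimodular v) (e : κ ≃ ι) : IsUnimodular (v ∘ e) := by
  obtain ⟨w, hw⟩ := h
  exact ⟨w ∘ e, by rw [comp_equiv_dotProduct_comp_equiv, hw]⟩

theorem of_glEquivalent [DecidableEq ι] {v w : ι → S} (h : IsUnimodular v)
    (hvw : GLEquivalent v w) : IsUnimodular w := by
  obtain ⟨e, rfl⟩ := hvw.exists_linearEquiv
  obtain ⟨u, hu⟩ := h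
  exact of_linearMap ((dotProductBilin S S u) ∘ₗ e.symm.toLinearMap) (by simpa using hu)

theorem ne_zero [Nontrivial S] {v : ι → S} (h : IsUnimodular v) : v ≠ 0 := by
  rintro rfl
  obtain ⟨w, hw⟩ := h
  simp at hw

end IsUnimodular

section SuslinPatching

variable {κ S T : Type*} [Fintype κ] [DecidableEq κ] [CommRing S] [CommRing T]

theorem exists_units_mul_eq_of_det_eq {ι : Type*} [Fintype ι] [DecidableEq ι] [IsDomain T]
    {P Q : Matrix ι ι T} {c : T} (hc : c ≠ 0) (hP : P.det = c) (hQ : Q.det = c)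
    (hPQ : ∀ i j, c ∣ Q i j - P i j) : ∃ N : (Matrix ι ι T)ˣ, (N : Matrix ι ι T) * P = Q := by
  choose E hE using hPQ
  have hN : (1 + of E * P.adjugate) * P = Q := by
    ext i j
    rw [add_mul, one_mul, mul_assoc, adjugate_mul, hP]
    simp [← hE]
  have hdet : (1 + of E * P.adjugate).det = 1 :=
    mul_right_cancel₀ hc (by rw [one_mul, ← hP, ← det_mul, hN, hQ, hP])
  exact ⟨nonsingInvUnit _ (hdet ▸ isUnit_one), hN⟩

theorem GLEquivalent.of_dvd_sub_fin_two [IsDomain T] (φ ψ : S →+* T) {c : T} (hc : c ≠ 0)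
    (hφψ : ∀ x, c ∣ φ x - ψ x) (v : Fin 2 → S) {g₀ g₁ : S}
    (hφ : φ (g₀ * v 0 + g₁ * v 1) = c) (hψ : ψ (g₀ * v 0 + g₁ * v 1) = c) :
    GLEquivalent (φ ∘ v) (ψ ∘ v) := by
  let P : Matrix (Fin 2) (Fin 2) S := !![v 0, -g₁; v 1, g₀]
  have hdet (χ : S →+* T) (hχ : χ (g₀ * v 0 + g₁ * v 1) = c) : (P.map χ).det = c := by
    rw [← hχ, ← RingHom.mapMatrix_apply, ← RingHom.map_det, det_fin_two_of]
    ring_nf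
  have hcol (χ : S →+* T) : P.map χ *ᵥ Pi.single 0 1 = χ ∘ v := by
    ext i; fin_cases i <;> simp [P]
  obtain ⟨N, hN⟩ := exists_units_mul_eq_of_det_eq hc (hdet φ hφ) (hdet ψ hψ)
    fun i j => dvd_sub_comm.1 (hφψ (P i j))
  exact ⟨N, by rw [← hcol φ, mulVec_mulVec, hN, hcol ψ]⟩

/-- The value `c` of the functional `x ↦ g₀ x₀ + g₁ x₁` divides `φ vⱼ - ψ vⱼ`, so one transvection
corrects all the coordinates `j` of the second summand at once; a `2 × 2` block does the rest. -/
theorem GLEquivalent.of_dvd_sub [IsDomain T] (φ ψ : S →+* T) {c : T} (hc : c ≠ 0)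
    (hφψ : ∀ x, c ∣ φ x - ψ x) (v : Fin 2 ⊕ κ → S) {g₀ g₁ : S}
    (hφ : φ (g₀ * v (.inl 0) + g₁ * v (.inl 1)) = c)
    (hψ : ψ (g₀ * v (.inl 0) + g₁ * v (.inl 1)) = c) :
    GLEquivalent (φ ∘ v) (ψ ∘ v) := by
  choose D hD using fun j => hφψ (v (.inr j))
  let f : Module.Dual T (Fin 2 ⊕ κ → T) :=
    φ g₀ • LinearMap.proj (.inl 0) + φ g₁ • LinearMap.proj (.inl 1)
  have hf : f (φ ∘ v) = c := by simpa [f] using hφ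
  have htrans := add_smul_of_apply_eq_zero f (u := Sum.elim (0 : Fin 2 → T) (-D))
    (by simp [f]) (φ ∘ v)
  have hcoord : φ ∘ v + f (φ ∘ v) • Sum.elim (0 : Fin 2 → T) (-D) =
      Sum.elim (φ ∘ v ∘ Sum.inl) (ψ ∘ v ∘ Sum.inr) := by
    ext (i | j)
    · simp
    · simp [hf, ← hD]
  rw [hcoord] at htrans
  refine (htrans.trans ((of_dvd_sub_fin_two φ ψ hc hφψ (v ∘ Sum.inl) hφ hψ).sumElim _)).trans ?_
  exact of_eq (Sum.elim_comp_inl_inr (ψ ∘ v))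

end SuslinPatching

section SuslinMonic

open Polynomial (compRingHom evalRingHom Monic)

theorem sub_dvd_comp_sub_comp {A : Type*} [CommRing A] (p b b' : Polynomial A) :
    b - b' ∣ p.comp b - p.comp b' := by
  simpa only [Polynomial.comp, Polynomial.eval₂_eq_eval_map] using
    Polynomial.sub_dvd_eval_sub b b' _

theorem exists_isCoprime_add_mul {D : Type*} [CommRing D] [IsDomain D] [IsPrincipalIdealRing D]
    {f a b x y z : D} (hf : f ≠ 0) (h : x * f + y * a + z * b = 1) :
    ∃ t, IsCoprime f (a + t * b) := by
  classical
  let s := (UniqueFactorizationMonoid.factors f).filter fun p => ¬ p ∣ a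
  refine ⟨s.prod, isCoprime_of_prime_dvd (fun h => hf h.1) fun p hp hpf hpab => ?_⟩
  by_cases hpa : p ∣ a
  · rcases hp.dvd_or_dvd ((dvd_add_right hpa).1 hpab) with hps | hpb
    · obtain ⟨q, hq, hpq⟩ := hp.exists_mem_multiset_dvd hps
      obtain ⟨hqf, hqa⟩ := Multiset.mem_filter.1 hq
      have hassoc := (hp.irreducible.dvd_irreducible_iff_associated
        (UniqueFactorizationMonoid.irreducible_of_factor q hqf)).1 hpq
      exact hqa (hassoc.symm.dvd.trans hpa)
    · apply hp.not_isUnit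
      rw [isUnit_iff_dvd_one, ← h]
      exact dvd_add (dvd_add (hpf.mul_left _) (hpa.mul_left _)) (hpb.mul_left _)
  · obtain ⟨q, hqf, hpq⟩ :=
      UniqueFactorizationMonoid.exists_mem_factors_of_dvd hf hp.irreducible hpf
    have hqs : q ∈ s := Multiset.mem_filter.2 ⟨hqf, fun hqa => hpa (hpq.dvd.trans hqa)⟩
    have hps : p ∣ s.prod := hpq.dvd.trans (Multiset.dvd_prod hqs)
    exact hpa ((dvd_add_left (hps.mul_right b)).1 hpab)

theorem exists_isCoprime_map_add_sum {A k κ : Type*} [CommRing A] [Field k] [Fintype κ]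
    {π : A →+* k} (hπ : Function.Surjective π) {v : Fin 2 ⊕ κ → Polynomial A}
    (hv : (v (.inl 0)).Monic) (hu : IsUnimodular v) :
    ∃ t : κ → Polynomial A, IsCoprime ((v (.inl 0)).map π)
      ((v (.inl 1) + ∑ j, t j * v (.inr j)).map π) := by
  obtain ⟨w, hw⟩ := hu
  have hmap := congr_arg (Polynomial.map π) hw
  simp only [dotProduct, Fintype.sum_sum_type, Fin.sum_univ_two, Polynomial.map_add,
    Polynomial.map_mul, Polynomial.map_one] at hmap
  rw [← one_mul (Polynomial.map π (∑ j, _))] at hmap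
  obtain ⟨t, ht⟩ := exists_isCoprime_add_mul (hv.map π).ne_zero hmap
  obtain ⟨t, rfl⟩ := Polynomial.map_surjective π hπ t
  refine ⟨fun j => t * w (.inr j), ?_⟩
  simpa only [Polynomial.map_add, Polynomial.map_mul, ← Polynomial.map_mul, Finset.mul_sum,
    mul_assoc] using ht

theorem exists_C_mem_span_pair_of_isCoprime_map {A k : Type*} [CommRing A] [Field k] (π : A →+* k)
    {f g : Polynomial A} (hf : f.Monic) (h : IsCoprime (f.map π) (g.map π)) :
    ∃ c : A, π c ≠ 0 ∧ Polynomial.C c ∈ Ideal.span {f, g} := by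
  by_cases hdeg : f.natDegree = 0
  · have hf1 := Polynomial.eq_one_of_monic_natDegree_zero hf hdeg
    exact ⟨1, by simp, Ideal.mem_span_pair.2 ⟨1, 0, by simp [hf1]⟩⟩
  obtain ⟨p, q, -, -, hpq⟩ :=
    Polynomial.exists_mul_add_mul_eq_C_resultant f g le_rfl le_rfl (.inl hdeg)
  refine ⟨_, fun hres => ?_, Ideal.mem_span_pair.2 ⟨p, q, by rw [← hpq]; ring⟩⟩
  have hunit := ((Polynomial.isUnit_resultant_iff_isCoprime (hf.map π)).2 h).ne_zero
  rw [← Polynomial.resultant_map_map, ← hf.natDegree_map π,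
    ← Nat.add_sub_cancel' (Polynomial.natDegree_map_le (f := π) (p := g)),
    Polynomial.resultant_add_right_deg _ _ _ _ _ le_rfl, (hf.map π).coeff_natDegree] at hres
  exact hunit (by simpa using hres)

/-- The ideal of those `c` for which the orbit of `v(b)` depends only on `b` modulo `c`. -/
def orbitCongruenceIdeal {A ι : Type*} [CommRing A] [Fintype ι] [DecidableEq ι]
    (v : ι → Polynomial A) : Ideal A where
  carrier := {c | ∀ b b' : Polynomial A, Polynomial.C c ∣ b - b' →
    GLEquivalent (compRingHom b ∘ v) (compRingHom b' ∘ v)}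
  add_mem' := by
    rintro c d hc hd b b' ⟨x, hx⟩
    refine (hc b (b - Polynomial.C c * x) (by simp)).trans (hd _ b' ⟨x, ?_⟩)
    rw [sub_right_comm, hx, Polynomial.C_add]; ring
  zero_mem' := by
    intro b b' h
    rw [Polynomial.C_0, zero_dvd_iff, sub_eq_zero] at h
    rw [h]
  smul_mem' := by
    intro a c hc b b' h
    exact hc b b' ((map_dvd Polynomial.C (dvd_mul_left c a)).trans h)

theorem orbitCongruenceIdeal_eq_top {A κ : Type*} [CommRing A] [IsDomain A] [Fintype κ]
    [DecidableEq κ] {v : Fin 2 ⊕ κ → Polynomial A} (hv : (v (.inl 0)).Monic)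
    (hu : IsUnimodular v) : orbitCongruenceIdeal v = ⊤ := by
  by_contra hI
  obtain ⟨m, hm, hIm⟩ := Ideal.exists_le_maximal _ hI
  let _ := Ideal.Quotient.field m
  obtain ⟨t, ht⟩ := exists_isCoprime_map_add_sum (Ideal.Quotient.mk_surjective (I := m)) hv hu
  obtain ⟨c, hcm, hc⟩ := exists_C_mem_span_pair_of_isCoprime_map _ hv ht
  rw [Ne, Ideal.Quotient.eq_zero_iff_mem] at hcm
  have hc0 : Polynomial.C c ≠ 0 := Polynomial.C_ne_zero.2 fun h => hcm (h ▸ m.zero_mem)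
  obtain ⟨g₀, g₁, hg⟩ := Ideal.mem_span_pair.1 hc
  let f : Module.Dual (Polynomial A) (Fin 2 ⊕ κ → Polynomial A) :=
    ∑ j, t j • LinearMap.proj (Sum.inr j)
  have hshear := GLEquivalent.add_smul_of_apply_eq_zero f (u := Pi.single (.inl 1) 1)
    (by simp [f]) v
  set v' := v + f v • Pi.single (.inl 1) 1
  have hv' : g₀ * v' (.inl 0) + g₁ * v' (.inl 1) = Polynomial.C c := by
    rw [← hg]
    simp [v', f]
  refine hcm (hIm fun b b' hbb' => (hshear.map _).trans (.trans ?_ (hshear.map _).symm))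
  have hdvd (x : Polynomial A) : Polynomial.C c ∣ compRingHom b x - compRingHom b' x :=
    hbb'.trans (sub_dvd_comp_sub_comp x b b')
  exact .of_dvd_sub _ _ hc0 hdvd v' (by rw [hv']; simp) (by rw [hv']; simp)

/-- Suslin's monic polynomial trick: `1 ∈ orbitCongruenceIdeal v` compares `b = X` and `b' = 0`. -/
theorem IsUnimodular.glEquivalent_C_eval_zero {A κ : Type*} [CommRing A] [IsDomain A] [Fintype κ]
    [DecidableEq κ] {v : Fin 2 ⊕ κ → Polynomial A} (hu : IsUnimodular v)
    (hv : (v (.inl 0)).Monic) : GLEquivalent v (Polynomial.C ∘ evalRingHom 0 ∘ v) := by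
  have h1 : (1 : A) ∈ orbitCongruenceIdeal v := orbitCongruenceIdeal_eq_top hv hu ▸ trivial
  simpa [Function.comp_def] using h1 Polynomial.X 0 (by simp)

end SuslinMonic

section Nagata

open Polynomial (Monic)

theorem exists_leadingCoeff_sum_C_mul_eq {R ι : Type*} [Semiring R] {s : Finset ι}
    (hs : s.Nonempty) {a : ι → R} (ha : ∀ i ∈ s, a i ≠ 0) {p : ι → Polynomial R}
    (hp : ∀ i ∈ s, (p i).Monic) (hinj : Set.InjOn (fun i => (p i).natDegree) s) :
    ∃ i ∈ s, (∑ j ∈ s, Polynomial.C (a j) * p j).leadingCoeff = a i := by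
  obtain ⟨i, hi, hmax⟩ := s.exists_max_image (fun i => (p i).natDegree) hs
  have hcoeff : (∑ j ∈ s, Polynomial.C (a j) * p j).coeff (p i).natDegree = a i := by
    rw [Polynomial.finsetSum_coeff, Finset.sum_eq_single_of_mem i hi fun j hj hji => ?_]
    · rw [Polynomial.coeff_C_mul, (hp i hi).coeff_natDegree, mul_one]
    · have hlt := (hmax j hj).lt_of_ne fun h => hji (hinj hj hi h)
      rw [Polynomial.coeff_C_mul, Polynomial.coeff_eq_zero_of_natDegree_lt hlt, mul_zero]
  refine ⟨i, hi, ?_⟩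
  rw [Polynomial.leadingCoeff, Polynomial.natDegree_eq_of_le_of_coeff_ne_zero _
    (hcoeff.symm ▸ ha i hi), hcoeff]
  exact Polynomial.natDegree_sum_le_of_forall_le s _ fun j hj =>
    (Polynomial.natDegree_C_mul_le _ _).trans (hmax j hj)

theorem sum_mul_pow_injOn (n N : ℕ) :
    Set.InjOn (fun s : Fin n → ℕ => ∑ i, s i * N ^ (i : ℕ)) {s | ∀ i, s i < N} := by
  intro s hs t ht hst
  have h : finFunctionFinEquiv (fun i => (⟨s i, hs i⟩ : Fin N)) =
      finFunctionFinEquiv fun i => ⟨t i, ht i⟩ := by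
    ext
    simpa only [finFunctionFinEquiv_apply] using hst
  funext i
  simpa using congr_fun (finFunctionFinEquiv.injective h) i

variable {R : Type*} [CommRing R] {n : ℕ}

/-- The substitution `X₀ ↦ X₀`, `Xᵢ₊₁ ↦ Xᵢ₊₁ + X₀ ^ eᵢ`, with its result read as a polynomial in
`X₀` over the polynomial ring in the remaining variables. -/
noncomputable def nagataEquiv (R : Type*) [CommRing R] {n : ℕ} (e : Fin n → ℕ) :
    MvPolynomial (Fin (n + 1)) R ≃ₐ[R] Polynomial (MvPolynomial (Fin n) R) :=
  (AlgEquiv.ofAlgHom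
    (aeval (Fin.cons (X 0) fun i => X i.succ + X 0 ^ e i))
    (aeval (Fin.cons (X 0) fun i => X i.succ - X 0 ^ e i))
    (by ext i; refine Fin.cases ?_ (fun i => ?_) i <;> simp)
    (by ext i; refine Fin.cases ?_ (fun i => ?_) i <;> simp)).trans (finSuccEquiv R n)

theorem nagataEquiv_C (e : Fin n → ℕ) (a : R) :
    nagataEquiv R e (C a) = Polynomial.C (C a) :=
  (nagataEquiv R e).commutes a

theorem nagataEquiv_monomial_one (e : Fin n → ℕ) (s : Fin (n + 1) →₀ ℕ) :
    nagataEquiv R e (monomial s 1) =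
      Polynomial.X ^ s 0 * ∏ i, (Polynomial.X ^ e i + Polynomial.C (X i)) ^ s i.succ := by
  rw [monomial_eq, Finsupp.prod_fintype _ _ fun _ => pow_zero _, Fin.prod_univ_succ]
  simp [nagataEquiv, finSuccEquiv_X_zero, finSuccEquiv_X_succ, add_comm]

theorem nagataEquiv_monomial (e : Fin n → ℕ) (s : Fin (n + 1) →₀ ℕ) (a : R) :
    nagataEquiv R e (monomial s a) =
      Polynomial.C (C a) * nagataEquiv R e (monomial s 1) := by
  rw [← mul_one a, ← C_mul_monomial, map_mul, nagataEquiv_C, mul_one]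

theorem monic_nagataEquiv_monomial_one {e : Fin n → ℕ} (he : ∀ i, e i ≠ 0)
    (s : Fin (n + 1) →₀ ℕ) : (nagataEquiv R e (monomial s 1)).Monic := by
  rw [nagataEquiv_monomial_one]
  exact (Polynomial.monic_X_pow _).mul (Polynomial.monic_prod_of_monic _ _ fun i _ =>
    (Polynomial.monic_X_pow_add_C _ (he i)).pow _)

theorem natDegree_nagataEquiv_monomial_one [Nontrivial R] {e : Fin n → ℕ} (he : ∀ i, e i ≠ 0)
    (s : Fin (n + 1) →₀ ℕ) :
    (nagataEquiv R e (monomial s 1)).natDegree = s 0 + ∑ i, s i.succ * e i := by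
  have hmonic (i : Fin n) :
      ((Polynomial.X ^ e i + Polynomial.C (X i : MvPolynomial (Fin n) R)) ^ s i.succ).Monic :=
    (Polynomial.monic_X_pow_add_C _ (he i)).pow _
  rw [nagataEquiv_monomial_one, (Polynomial.monic_X_pow _).natDegree_mul
    (Polynomial.monic_prod_of_monic _ _ fun i _ => hmonic i),
    Polynomial.natDegree_prod_of_monic _ _ fun i _ => hmonic i, Polynomial.natDegree_X_pow]
  simp only [(Polynomial.monic_X_pow_add_C _ (he _)).natDegree_pow,
    Polynomial.natDegree_X_pow_add_C]

/-- With `eᵢ = N ^ (i + 1)` and `N` larger than every exponent in `f`, distinct monomials of `f`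
get distinct degrees in `X₀`: the exponents are the digits of the degree in base `N`. -/
theorem exists_monic_nagataEquiv_C_mul {K : Type*} [Field K]
    {f : MvPolynomial (Fin (n + 1)) K} (hf : f ≠ 0) :
    ∃ (e : Fin n → ℕ) (a : K), a ≠ 0 ∧ (nagataEquiv K e (C a * f)).Monic := by
  let N := f.totalDegree + 1
  let e : Fin n → ℕ := fun i => N ^ (i + 1 : ℕ)
  have he (i : Fin n) : e i ≠ 0 := pow_ne_zero _ (Nat.succ_ne_zero _)
  have hinj : Set.InjOn
      (fun s => (nagataEquiv K e (monomial s 1)).natDegree) (f.support : Set _) := by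
    have hN (s) (hs : s ∈ f.support) (i) : s i < N := Nat.lt_succ_of_le
      ((monomial_le_degreeOf i hs).trans (degreeOf_le_totalDegree f i))
    intro s hs t ht hst
    refine DFunLike.coe_injective (sum_mul_pow_injOn (n + 1) N (hN s hs) (hN t ht) ?_)
    simpa [natDegree_nagataEquiv_monomial_one he, Fin.sum_univ_succ, e] using hst
  obtain ⟨s, hs, hlead⟩ := exists_leadingCoeff_sum_C_mul_eq (support_nonempty.2 hf)
    (fun t ht => C_ne_zero.2 (mem_support_iff.1 ht))
    (fun t _ => monic_nagataEquiv_monomial_one he t) hinj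
  have hlead : (nagataEquiv K e f).leadingCoeff = C (coeff s f) := by
    rw [← hlead]
    conv_lhs => rw [f.as_sum, map_sum]
    simp only [← nagataEquiv_monomial]
  have hcoeff : coeff s f ≠ 0 := mem_support_iff.1 hs
  refine ⟨e, (coeff s f)⁻¹, inv_ne_zero hcoeff, ?_⟩
  rw [map_mul, nagataEquiv_C]
  refine Polynomial.monic_C_mul_of_mul_leadingCoeff_eq_one ?_
  rw [hlead, ← C_mul, inv_mul_cancel₀ hcoeff, C_1]

end Nagata

section Hermite

/-- A Hermite ring in the sense of Lam: every unimodular vector is, up to `GL`, a standard basis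
vector; equivalently, every unimodular row can be completed to an invertible matrix. -/
def IsHermite (S : Type*) [CommRing S] : Prop :=
  ∀ (ι : Type) [Fintype ι] [DecidableEq ι] (v : ι → S) (i : ι),
    IsUnimodular v → GLEquivalent v (Pi.single i 1)

theorem IsHermite.of_isField {S : Type*} [CommRing S] (hS : IsField S) : IsHermite S := by
  intro ι _ _ v i hv
  let _ := hS.toField
  obtain ⟨j, hj⟩ := Function.ne_iff.1 hv.ne_zero
  exact (GLEquivalent.single_of_isUnit (Ne.isUnit hj)).trans (.single_single j i)

theorem IsHermite.of_ringEquiv {R S : Type*} [CommRing R] [CommRing S] (hR : IsHermite R)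
    (E : R ≃+* S) : IsHermite S := by
  intro ι _ _ v i hv
  refine .of_comp_ringEquiv E.symm ?_
  have := hR ι _ i (hv.map E.symm.toRingHom)
  rwa [← ringHom_comp_single_one E.symm.toRingHom] at this

theorem exists_fin_two_sum_fin_equiv {ι : Type*} [Finite ι] [Nontrivial ι] (i : ι) :
    ∃ (k : ℕ) (e : Fin 2 ⊕ Fin k ≃ ι), e (.inl 0) = i := by
  classical
  have := Fintype.ofFinite ι
  have hcard : Fintype.card (Fin 2 ⊕ Fin (Fintype.card ι - 2)) = Fintype.card ι := by
    have := Fintype.one_lt_card (α := ι)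
    rw [Fintype.card_sum, Fintype.card_fin, Fintype.card_fin]
    omega
  let e := Fintype.equivOfCardEq hcard
  exact ⟨_, e.trans (Equiv.swap (e (.inl 0)) i), Equiv.swap_apply_left _ _⟩

theorem IsHermite.glEquivalent_single_of_monic {A : Type*} [CommRing A] [IsDomain A]
    (hA : IsHermite A) {ι : Type} [Fintype ι] [DecidableEq ι] {v : ι → Polynomial A} {i : ι}
    (hi : (v i).Monic) (hv : IsUnimodular v) : GLEquivalent v (Pi.single i 1) := by
  rcases subsingleton_or_nontrivial ι with _ | _
  · obtain ⟨w, hw⟩ := hv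
    rw [dotProduct, Fintype.sum_subsingleton _ i] at hw
    exact .single_of_isUnit (.of_mul_eq_one_right (w i) hw)
  obtain ⟨k, e, rfl⟩ := exists_fin_two_sum_fin_equiv i
  have hev := hv.comp_equiv e
  have hsingle := (hA _ _ (.inl 0) (hev.map (Polynomial.evalRingHom 0))).map Polynomial.C
  rw [ringHom_comp_single_one] at hsingle
  refine .of_comp_equiv e ((hev.glEquivalent_C_eval_zero hi).trans (hsingle.trans (.of_eq ?_)))
  ext1 j
  simp [Pi.single_apply]

theorem isHermite_mvPolynomial (K : Type*) [Field K] (n : ℕ) :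
    IsHermite (MvPolynomial (Fin n) K) := by
  induction n with
  | zero =>
    exact .of_isField ((isEmptyRingEquiv K (Fin 0)).toMulEquiv.isField (Field.toIsField K))
  | succ n ih =>
    intro ι _ _ v i hv
    obtain ⟨j, hj⟩ := Function.ne_iff.1 hv.ne_zero
    obtain ⟨e, a, ha, hmonic⟩ := exists_monic_nagataEquiv_C_mul hj
    let u : (MvPolynomial (Fin (n + 1)) K)ˣ := Units.map C.toMonoidHom (Units.mk0 a ha)
    have hscale := GLEquivalent.units_smul_coord j u v
    set v' := Function.update v j (u * v j)
    let E := (nagataEquiv K e).toRingEquiv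
    have hEv : IsUnimodular (E ∘ v') := (hv.of_glEquivalent hscale).map E.toRingHom
    have hmonic : ((E ∘ v') j).Monic := by
      rwa [Function.comp_apply, show v' j = C a * v j from Function.update_self ..]
    have hE := ih.glEquivalent_single_of_monic hmonic hEv
    rw [← ringHom_comp_single_one E.toRingHom] at hE
    exact hscale.trans ((GLEquivalent.of_comp_ringEquiv E hE).trans (.single_single j i))

end Hermite

section ProjectiveFree

universe u

/-- A ring over which finitely generated projective modules are free. The modules range over the
universe of the ring, which loses no generality for finitely generated modules. -/
def IsProjectiveFree (R : Type u) [CommRing R] : Prop :=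
  ∀ (P : Type u) [AddCommGroup P] [Module R P] [Module.Finite R P] [Module.Projective R P],
    Module.Free R P

theorem exists_basis_fin (R M : Type*) [CommRing R] [AddCommGroup M] [Module R M]
    [Module.Finite R M] [Module.Free R M] : ∃ k, Nonempty (Module.Basis (Fin k) R M) :=
  ⟨_, ⟨(Module.Free.chooseBasis R M).reindex (Fintype.equivFin _)⟩⟩

section StablyFree

variable {R Q : Type*} [CommRing R] [AddCommGroup Q] [Module R Q]

theorem free_of_map_inr_eq_single {ι : Type*} [Finite ι] [DecidableEq ι] {i : ι}
    (e : (Q × R) ≃ₗ[R] (ι → R)) (he : e (0, 1) = Pi.single i 1) : Module.Free R Q := by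
  let res := LinearMap.funLeft R R (Subtype.val : {j // j ≠ i} → ι) ∘ₗ e.toLinearMap
  have hres : Function.Surjective res :=
    (LinearMap.funLeft_surjective_of_injective R R _ Subtype.val_injective).comp e.surjective
  have inr (a : R) : e (0, a) = Pi.single i a := by
    simpa [he, ← Pi.single_smul'] using e.map_smul a (0, 1)
  have hker : LinearMap.ker (LinearMap.fst R Q R) = LinearMap.ker res := by
    ext ⟨q, a⟩
    constructor
    · rintro rfl
      ext j
      simp [res, inr, LinearMap.funLeft_apply, j.2]
    · intro h
      have : e (q, a) = e (0, e (q, a) i) := by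
        ext j
        rw [inr]
        obtain rfl | hj := eq_or_ne j i
        · simp
        · simpa [hj, res, LinearMap.funLeft_apply] using congrFun h ⟨j, hj⟩
      exact congrArg Prod.fst (e.injective this)
  exact .of_equiv ((res.quotKerEquivOfSurjective hres).symm ≪≫ₗ
    Submodule.quotEquivOfEq _ _ hker.symm ≪≫ₗ
    (LinearMap.fst R Q R).quotKerEquivOfSurjective LinearMap.fst_surjective)

theorem IsHermite.free_of_free_prod_self (hR : IsHermite R) [Module.Finite R Q]
    [Module.Free R (Q × R)] : Module.Free R Q := by
  rcases subsingleton_or_nontrivial R with _ | _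
  · exact .of_subsingleton' R Q
  obtain ⟨k, ⟨b⟩⟩ := exists_basis_fin R (Q × R)
  let e := b.equivFun
  have huni : IsUnimodular (e (0, 1)) :=
    .of_linearMap (LinearMap.snd R Q R ∘ₗ e.symm.toLinearMap) (by simp)
  obtain ⟨i⟩ : Nonempty (Fin k) := by
    by_contra h
    rw [not_nonempty_iff] at h
    exact huni.ne_zero (Subsingleton.elim _ _)
  obtain ⟨g, hg⟩ := (hR (Fin k) _ i huni).exists_linearEquiv
  exact free_of_map_inr_eq_single (e ≪≫ₗ g) hg

theorem IsHermite.free_of_isStablyFree (hR : IsHermite R) [Module.Finite R Q]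
    [Module.IsStablyFree R Q] : Module.Free R Q := by
  obtain ⟨N, _, _, _, _, _⟩ := Module.IsStablyFree.exist_free_prod R Q
  obtain ⟨k, ⟨b⟩⟩ := exists_basis_fin R N
  have hk : Module.Free R (Q × (Fin k → R)) :=
    .of_equiv ((LinearEquiv.refl R Q).prodCongr b.equivFun)
  clear b
  induction k with
  | zero => exact .of_equiv (LinearEquiv.prodUnique (M₂ := Fin 0 → R))
  | succ k ih =>
    let e : (Q × (Fin (k + 1) → R)) ≃ₗ[R] (Q × (Fin k → R)) × R :=
      (LinearEquiv.refl R Q).prodCongr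
        ((Fin.consLinearEquiv R fun _ => R).symm ≪≫ₗ LinearEquiv.prodComm ..) ≪≫ₗ
      (LinearEquiv.prodAssoc R Q (Fin k → R) R).symm
    have : Module.Free R ((Q × (Fin k → R)) × R) := .of_equiv e
    exact ih hR.free_of_free_prod_self

theorem nonempty_schanuel_equiv {P L M : Type*} [AddCommGroup P] [Module R P] [AddCommGroup L]
    [Module R L] [AddCommGroup M] [Module R M] [Module.Projective R P] [Module.Projective R L]
    {f : P →ₗ[R] M} {g : L →ₗ[R] M} (hf : Function.Surjective f) (hg : Function.Surjective g) :
    Nonempty ((P × LinearMap.ker g) ≃ₗ[R] (L × LinearMap.ker f)) := by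
  obtain ⟨h, hgh⟩ := Module.projective_lifting_property g f hg
  obtain ⟨h', hfh'⟩ := Module.projective_lifting_property f g hf
  replace hgh (p) : g (h p) = f p := LinearMap.congr_fun hgh p
  replace hfh' (l) : f (h' l) = g l := LinearMap.congr_fun hfh' l
  refine ⟨{
    toFun x := (h x.1 + x.2, ⟨x.1 - h' (h x.1 + x.2), by simp [hgh, hfh']⟩)
    invFun y := (y.2 + h' y.1, ⟨y.1 - h (y.2 + h' y.1), by simp [hgh, hfh']⟩)
    map_add' x y := ?_
    map_smul' a x := ?_
    left_inv x := ?_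
    right_inv y := ?_ }⟩
  · ext <;> simp only [Prod.fst_add, Prod.snd_add, map_add, Submodule.coe_add] <;> abel
  · ext <;> simp [smul_add, smul_sub]
  · ext <;> simp
  · ext <;> simp

end StablyFree

section PolynomialModule

variable {A : Type*} [CommRing A] {M N : Type*} [AddCommGroup M] [Module A M]
  [Module (Polynomial A) M] [IsScalarTower A (Polynomial A) M] [AddCommGroup N] [Module A N]
  [Module (Polynomial A) N] [IsScalarTower A (Polynomial A) N]

theorem map_polynomial_smul {f : M →ₗ[A] N}
    (hf : ∀ x, f ((Polynomial.X : Polynomial A) • x) = (Polynomial.X : Polynomial A) • f x)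
    (p : Polynomial A) (x : M) : f (p • x) = p • f x := by
  induction p using Polynomial.induction_on generalizing x with
  | C a => simp only [← Polynomial.algebraMap_eq, algebraMap_smul, map_smul]
  | add p q hp hq => rw [add_smul, map_add, hp, hq, add_smul]
  | monomial n a ih => rw [pow_succ, ← mul_assoc, mul_smul, ih, hf, smul_smul]

theorem projective_of_polynomial [Module.Projective (Polynomial A) M] :
    Module.Projective A M := by
  obtain ⟨s, hs⟩ := Module.projective_def'.1 ‹Module.Projective (Polynomial A) M›
  exact .of_split (s.restrictScalars A) ((Finsupp.linearCombination _ id).restrictScalars A)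
    (LinearMap.ext fun x => LinearMap.congr_fun hs x)

theorem exists_leftInverse_monic_smul [Module.Free (Polynomial A) N] {g : Polynomial A}
    (hg : g.Monic) : ∃ ρ : N →ₗ[A] N, ∀ x, ρ (g • x) = x := by
  have mul_quo (p) : g * (p /ₘ g) = p - p %ₘ g :=
    eq_sub_of_add_eq' (Polynomial.modByMonic_add_div p g)
  let quo : Polynomial A →ₗ[A] Polynomial A :=
    { toFun := fun p => p /ₘ g
      map_add' := fun p q => hg.isRegular.left <| by
        simp only [mul_add, mul_quo, Polynomial.add_modByMonic]
        ring
      map_smul' := fun a p => hg.isRegular.left <| by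
        simp only [mul_smul_comm, mul_quo, Polynomial.smul_modByMonic, smul_sub, RingHom.id_apply] }
  obtain ⟨ι, b⟩ := Module.Free.exists_basis (R := Polynomial A) (M := N)
  refine ⟨b.repr.symm.toLinearMap.restrictScalars A ∘ₗ Finsupp.mapRange.linearMap quo ∘ₗ
    b.repr.toLinearMap.restrictScalars A, fun x => b.repr.injective ?_⟩
  ext i : 1
  simp [quo, Polynomial.mul_divByMonic_cancel_left _ hg]

theorem finite_of_isTorsionBy_monic [Module.Finite (Polynomial A) M] {g : Polynomial A}
    (hg : g.Monic) (h : Module.IsTorsionBy (Polynomial A) M g) : Module.Finite A M := by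
  let _ := h.module
  have : IsScalarTower A (Polynomial A ⧸ Ideal.span {g}) M :=
    Module.IsTorsionBySet.isScalarTower _
  have : IsScalarTower (Polynomial A) (Polynomial A ⧸ Ideal.span {g}) M :=
    Module.IsTorsionBySet.isScalarTower _
  have := hg.finite_quotient
  have := Module.Finite.of_restrictScalars_finite (Polynomial A) (Polynomial A ⧸ Ideal.span {g}) M
  exact .trans (Polynomial A ⧸ Ideal.span {g}) M

theorem charmatrix_row {ι : Type*} [Fintype ι] [DecidableEq ι] (T : Matrix ι ι A) (i : ι) :
    T.charmatrix.row i =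
      (Polynomial.X : Polynomial A) • Pi.single i 1 - Polynomial.C ∘ T.row i := by
  ext1 j
  simp [charmatrix_apply, Matrix.diagonal_apply, Pi.single_apply, eq_comm]

theorem linearCombination_C_comp {ι : Type*} [Fintype ι] (v : ι → M) (c : ι → A) :
    Fintype.linearCombination (Polynomial A) v (Polynomial.C ∘ c) = ∑ i, c i • v i := by
  simp only [Fintype.linearCombination_apply, Function.comp_apply, ← Polynomial.algebraMap_eq,
    algebraMap_smul]

theorem ker_linearCombination_basis {ι : Type*} [Fintype ι] [DecidableEq ι]
    (b : Module.Basis ι A M) :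
    LinearMap.ker (Fintype.linearCombination (Polynomial A) b) =
      Submodule.span (Polynomial A) (Set.range
        (charmatrix fun i j => b.repr ((Polynomial.X : Polynomial A) • b i) j).row) := by
  set T : Matrix ι ι A := fun i j => b.repr ((Polynomial.X : Polynomial A) • b i) j
  set W := Submodule.span (Polynomial A) (Set.range T.charmatrix.row)
  apply le_antisymm
  · -- `x ↦ (constant vector of coordinates of x) mod W` is `A[X]`-linear and inverts the map
    -- induced by `b` on the quotient by `W`.
    let const : M →ₗ[A] ι → Polynomial A :=
      (Algebra.linearMap A (Polynomial A)).compLeft ι ∘ₗ b.equivFun.toLinearMap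
    let f : M →ₗ[A] ((ι → Polynomial A) ⧸ W) := W.mkQ.restrictScalars A ∘ₗ const
    have const_basis (i) : const (b i) = Pi.single i 1 := by
      ext1 j
      obtain rfl | hj := eq_or_ne j i
      · simp [const]
      · simp [const, hj]
    have f_X : f ∘ₗ Algebra.lsmul A A M (Polynomial.X : Polynomial A) =
        Algebra.lsmul A A _ (Polynomial.X : Polynomial A) ∘ₗ f := b.ext fun i => by
      have hi : W.mkQ (T.charmatrix.row i) = 0 :=
        (Submodule.Quotient.mk_eq_zero W).2 (Submodule.subset_span ⟨i, rfl⟩)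
      rw [charmatrix_row, map_sub, sub_eq_zero, map_smul, ← const_basis] at hi
      exact hi.symm
    let F : M →ₗ[Polynomial A] ((ι → Polynomial A) ⧸ W) :=
      { f with map_smul' := map_polynomial_smul (LinearMap.congr_fun f_X) }
    have F_comp : F ∘ₗ Fintype.linearCombination (Polynomial A) b = W.mkQ := by
      ext i : 3
      simp [F, f, const_basis]
    rw [← W.ker_mkQ, ← F_comp]
    exact LinearMap.ker_le_ker_comp _ _
  · rw [Submodule.span_le]
    rintro _ ⟨i, rfl⟩
    rw [SetLike.mem_coe, LinearMap.mem_ker, charmatrix_row, map_sub, sub_eq_zero, map_smul,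
      Fintype.linearCombination_apply_single, one_smul, linearCombination_C_comp]
    exact (b.sum_repr _).symm

theorem exists_surjective_free_ker [IsDomain A] [Module.Free A M] [Module.Finite A M] :
    ∃ (s : ℕ) (f : (Fin s → Polynomial A) →ₗ[Polynomial A] M), Function.Surjective f ∧
      Module.Free (Polynomial A) (LinearMap.ker f) ∧
      Module.Finite (Polynomial A) (LinearMap.ker f) := by
  obtain ⟨s, ⟨b⟩⟩ := exists_basis_fin A M
  refine ⟨s, Fintype.linearCombination (Polynomial A) b, fun x => ?_, ?_⟩
  · exact ⟨Polynomial.C ∘ b.repr x, by rw [linearCombination_C_comp, b.sum_repr]⟩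
  · rw [ker_linearCombination_basis]
    have rows := Module.Basis.span <| linearIndependent_rows_of_det_ne_zero <|
      Polynomial.Monic.ne_zero <| charpoly_monic fun i j =>
        b.repr ((Polynomial.X : Polynomial A) • b i) j
    exact ⟨.of_basis rows, .of_basis rows⟩

theorem projective_quotient_of_retraction {R P : Type*} [CommRing R] [AddCommGroup P] [Module R P]
    [Module.Projective R P] {N : Submodule R P} {f : P →ₗ[R] N} (hf : ∀ x : N, f x = x) :
    Module.Projective R (P ⧸ N) :=
  let e := N.quotientEquivOfIsCompl _ (LinearMap.isCompl_of_proj hf)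
  .of_split ((LinearMap.ker f).subtype ∘ₗ e.toLinearMap) N.mkQ
    (LinearMap.ext fun x => e.symm_apply_apply x)

theorem projective_quotient_of_monic_smul_mem [Module.Projective (Polynomial A) M]
    {N : Submodule (Polynomial A) M} [Module.Free (Polynomial A) N] {g : Polynomial A}
    (hg : g.Monic) (hgN : ∀ x : M, g • x ∈ N) : Module.Projective A (M ⧸ N) := by
  obtain ⟨ρ, hρ⟩ := exists_leftInverse_monic_smul (N := N) hg
  have := projective_of_polynomial (A := A) (M := M)
  let f : M →ₗ[A] N.restrictScalars A :=
    ρ ∘ₗ ((Algebra.lsmul A (Polynomial A) M g).codRestrict N hgN).restrictScalars A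
  have := projective_quotient_of_retraction (f := f) hρ
  exact .of_equiv (Submodule.Quotient.restrictScalarsEquiv A N)

end PolynomialModule

theorem isStablyFree_of_monic_smul_mem {A P : Type u} [CommRing A] [IsDomain A]
    (hA : IsProjectiveFree A) [AddCommGroup P] [Module (Polynomial A) P]
    [Module.Finite (Polynomial A) P] [Module.Projective (Polynomial A) P]
    {N : Submodule (Polynomial A) P} [Module.Free (Polynomial A) N]
    [Module.Finite (Polynomial A) N] {g : Polynomial A} (hg : g.Monic) (hgN : ∀ x : P, g • x ∈ N) :
    Module.IsStablyFree (Polynomial A) P := by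
  let _ : Module A P := Module.compHom P Polynomial.C
  have : IsScalarTower A (Polynomial A) P :=
    ⟨fun a p x => by rw [Polynomial.smul_eq_C_mul, mul_smul]; rfl⟩
  have := projective_quotient_of_monic_smul_mem hg hgN
  have := finite_of_isTorsionBy_monic hg ((Module.isTorsionBy_quotient_iff N g).2 hgN)
  have := hA (P ⧸ N)
  obtain ⟨s, f, hf, _, _⟩ := exists_surjective_free_ker (A := A) (M := P ⧸ N)
  obtain ⟨e⟩ := nonempty_schanuel_equiv N.mkQ_surjective hf
  have : Module.Free (Polynomial A) (LinearMap.ker N.mkQ) := by rwa [N.ker_mkQ]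
  have : Module.Free (Polynomial A) (P × LinearMap.ker f) := .of_equiv e.symm
  exact .of_free_prod (Polynomial A) P (LinearMap.ker f)

theorem exists_free_submodule_smul_mem (R P : Type*) [CommRing R] [IsDomain R] [AddCommGroup P]
    [Module R P] [Module.Finite R P] :
    ∃ (N : Submodule R P) (f : R), Module.Free R N ∧ Module.Finite R N ∧ f ≠ 0 ∧
      ∀ x : P, f • x ∈ N := by
  obtain ⟨b, hb⟩ := exists_linearIndependent_of_le_finrank (le_refl (Module.finrank R P))
  have basis := Module.Basis.span hb
  have htorsion : Module.IsTorsion R (P ⧸ Submodule.span R (Set.range b)) := by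
    rw [← Module.finrank_eq_zero_iff_isTorsion]
    have := (Submodule.span R (Set.range b)).finrank_quotient_add_finrank
    rwa [finrank_span_eq_card hb, Fintype.card_fin, Nat.add_eq_right] at this
  obtain ⟨f, hf, hf0⟩ := Submodule.annihilator_top_inter_nonZeroDivisors htorsion
  refine ⟨_, f, .of_basis basis, .of_basis basis, nonZeroDivisors.ne_zero hf0, fun x => ?_⟩
  rw [← Submodule.Quotient.mk_eq_zero, Submodule.Quotient.mk_smul]
  exact Submodule.mem_annihilator.1 hf _ trivial

theorem free_of_monic_ringEquiv {R A P : Type u} [CommRing R] [CommRing A] [IsDomain A]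
    (hR : IsHermite R) (hA : IsProjectiveFree A) (e : R ≃+* Polynomial A)
    [AddCommGroup P] [Module R P] [Module.Finite R P] [Module.Projective R P] {N : Submodule R P}
    [Module.Free R N] [Module.Finite R N] {f : R} (hf : (e f).Monic) (hfN : ∀ x : P, f • x ∈ N) :
    Module.Free R P := by
  let _ : Module (Polynomial A) P := Module.compHom P e.symm.toRingHom
  let _ := RingHomInvPair.of_ringEquiv e
  let _ := RingHomInvPair.of_ringEquiv e.symm
  let E : P ≃ₛₗ[(e : R →+* Polynomial A)] P :=
    { AddEquiv.refl P with
      map_smul' := fun r x => congrArg (· • x) (e.symm_apply_apply r).symm }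
  let EN := E.submoduleMap N
  have : Module.Projective (Polynomial A) P := .of_equiv E
  have : Module.Finite (Polynomial A) P := .of_surjective E.toLinearMap E.surjective
  have : Module.Free (Polynomial A) (N.map E.toLinearMap) := .of_equiv EN
  have : Module.Finite (Polynomial A) (N.map E.toLinearMap) :=
    .of_surjective EN.toLinearMap EN.surjective
  have hN (x : P) : e f • x ∈ N.map E.toLinearMap := ⟨f • x, hfN x, E.map_smulₛₗ f x⟩
  have := isStablyFree_of_monic_smul_mem hA hf hN
  have := (hR.of_ringEquiv e).free_of_isStablyFree (Q := P)
  exact .of_equiv E.symm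

theorem isProjectiveFree_mvPolynomial (K : Type u) [Field K] (n : ℕ) :
    IsProjectiveFree (MvPolynomial (Fin n) K) := by
  induction n with
  | zero =>
    intro P _ _ _ _
    let _ := ((isEmptyRingEquiv K (Fin 0)).toMulEquiv.isField (Field.toIsField K)).toField
    infer_instance
  | succ n ih =>
    intro P _ _ _ _
    obtain ⟨N, f, _, _, hf0, hfN⟩ := exists_free_submodule_smul_mem (MvPolynomial (Fin (n + 1)) K) P
    obtain ⟨e, a, -, hmonic⟩ := exists_monic_nagataEquiv_C_mul hf0
    have hafN (x : P) : (C a * f) • x ∈ N := by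
      rw [mul_smul]
      exact N.smul_mem _ (hfN x)
    exact free_of_monic_ringEquiv (isHermite_mvPolynomial K (n + 1)) ih
      (nagataEquiv K e).toRingEquiv hmonic hafN

end ProjectiveFree

section Minors

variable {R : Type*} [CommRing R] {l m p r k : ℕ}

theorem det_submatrix_mem_span_minorsSet (F : Matrix (Fin l) (Fin m) R) (f : Fin k → Fin l)
    (g : Fin k → Fin m) : (F.submatrix f g).det ∈ Ideal.span (minorsSet F k) := by
  by_cases hf : Function.Injective f
  · by_cases hg : Function.Injective g
    · exact Ideal.subset_span ⟨⟨f, hf⟩, ⟨g, hg⟩, rfl⟩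
    · obtain ⟨i, j, hij, hne⟩ := Function.not_injective_iff.1 hg
      rw [det_zero_of_column_eq hne fun x => congrArg (F (f x)) hij]
      exact Ideal.zero_mem _
  · obtain ⟨i, j, hij, hne⟩ := Function.not_injective_iff.1 hf
    rw [det_zero_of_row_eq hne (funext fun x => congrArg (F · (g x)) hij)]
    exact Ideal.zero_mem _

theorem dvd_det_submatrix {F : Matrix (Fin l) (Fin m) R} {d : R}
    (hd : ∀ p ∈ minorsSet F k, d ∣ p) (f : Fin k → Fin l) (g : Fin k → Fin m) :
    d ∣ (F.submatrix f g).det := by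
  have hle : Ideal.span (minorsSet F k) ≤ Ideal.span {d} :=
    Ideal.span_le.2 fun p hp => Ideal.mem_span_singleton.2 (hd p hp)
  exact Ideal.mem_span_singleton.1 (hle (det_submatrix_mem_span_minorsSet F f g))

theorem det_submatrix_mul (A : Matrix (Fin l) (Fin p) R) (B : Matrix (Fin p) (Fin m) R)
    (f : Fin k → Fin l) (g : Fin k → Fin m) :
    ((A * B).submatrix f g).det =
      ∑ s : Fin k → Fin p, (∏ i, A (f i) (s i)) * (B.submatrix s g).det := by
  have hrows : (A * B).submatrix f g = fun i => ∑ x, A (f i) x • fun j => B x (g j) := by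
    ext i j
    simp [mul_apply]
  rw [hrows]
  change detRowAlternating.toMultilinearMap _ = _
  rw [MultilinearMap.map_sum]
  exact Finset.sum_congr rfl fun s _ => MultilinearMap.map_smul_univ _ _ _

theorem minorsSet_transpose (F : Matrix (Fin l) (Fin m) R) : minorsSet Fᵀ k = minorsSet F k := by
  ext x
  constructor <;> rintro ⟨f, g, rfl⟩ <;>
    exact ⟨g, f, by rw [← transpose_submatrix, det_transpose]⟩

theorem span_minorsSet_mul_le_right (A : Matrix (Fin l) (Fin p) R) (B : Matrix (Fin p) (Fin m) R) :
    Ideal.span (minorsSet (A * B) k) ≤ Ideal.span (minorsSet B k) := by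
  rw [Ideal.span_le]
  rintro _ ⟨f, g, rfl⟩
  rw [SetLike.mem_coe, det_submatrix_mul]
  exact Ideal.sum_mem _ fun s _ =>
    Ideal.mul_mem_left _ _ (det_submatrix_mem_span_minorsSet B s g)

theorem span_minorsSet_mul_le_left (A : Matrix (Fin l) (Fin p) R) (B : Matrix (Fin p) (Fin m) R) :
    Ideal.span (minorsSet (A * B) k) ≤ Ideal.span (minorsSet A k) := by
  rw [← minorsSet_transpose, ← minorsSet_transpose A, transpose_mul]
  exact span_minorsSet_mul_le_right _ _

theorem span_minorsSet_mul_mul_le {q : ℕ} (A : Matrix (Fin l) (Fin p) R)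
    (B : Matrix (Fin p) (Fin q) R) (C : Matrix (Fin q) (Fin m) R) :
    Ideal.span (minorsSet (A * B * C) k) ≤ Ideal.span (minorsSet B k) :=
  (span_minorsSet_mul_le_left _ _).trans (span_minorsSet_mul_le_right _ _)

theorem HasRank.transpose {F : Matrix (Fin l) (Fin m) R} (hF : HasRank F r) : HasRank Fᵀ r := by
  rwa [HasRank, minorsSet_transpose, minorsSet_transpose]

theorem HasRank.le_height {F : Matrix (Fin l) (Fin m) R} (hF : HasRank F r) : r ≤ l := by
  obtain ⟨⟨_, ⟨f, _, _⟩, _⟩, _⟩ := hF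
  simpa using Fintype.card_le_of_embedding f

theorem HasRank.le_width {F : Matrix (Fin l) (Fin m) R} (hF : HasRank F r) : r ≤ m :=
  hF.transpose.le_height

theorem HasRank.span_minorsSet_succ {F : Matrix (Fin l) (Fin m) R} (hF : HasRank F r) :
    Ideal.span (minorsSet F (r + 1)) = ⊥ :=
  Ideal.span_eq_bot.2 hF.2

theorem HasRank.le_of_eq_mul {F : Matrix (Fin l) (Fin m) R} (hF : HasRank F r)
    {B : Matrix (Fin l) (Fin p) R} {X : Matrix (Fin p) (Fin m) R} (h : F = B * X) : r ≤ p := by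
  by_contra! hlt
  obtain ⟨⟨x, hx, hx0⟩, _⟩ := hF
  have hX : minorsSet X r = ∅ := by
    refine Set.eq_empty_of_forall_notMem ?_
    rintro _ ⟨f, _, _⟩
    exact hlt.not_ge (by simpa using Fintype.card_le_of_embedding f)
  have hle := span_minorsSet_mul_le_right (k := r) B X
  rw [← h, hX, Ideal.span_empty] at hle
  exact hx0 (hle (Ideal.subset_span hx))

theorem HasRank.le_of_mul_mul_eq_smul_one [IsDomain R] {F : Matrix (Fin l) (Fin m) R}
    (hF : HasRank F r) {C : Matrix (Fin p) (Fin l) R} {D : Matrix (Fin m) (Fin p) R} {d : R}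
    (hd : d ≠ 0) (h : C * F * D = d • (1 : Matrix (Fin p) (Fin p) R)) : p ≤ r := by
  by_contra! hlt
  have hmem := det_submatrix_mem_span_minorsSet (C * F * D) (Fin.castLE hlt) (Fin.castLE hlt)
  have hdet := span_minorsSet_mul_mul_le C F D hmem
  rw [hF.span_minorsSet_succ, h, submatrix_smul, Pi.smul_apply, Pi.smul_apply,
    submatrix_one _ (Fin.castLE_injective hlt), det_smul, det_one, mul_one, Ideal.mem_bot] at hdet
  exact pow_ne_zero _ hd hdet

theorem JkUnit.transpose {F : Matrix (Fin l) (Fin m) R} (hF : JkUnit F k) : JkUnit Fᵀ k := by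
  simpa only [JkUnit, IsGcdMinors, reducedIdeal, minorsSet_transpose] using hF

theorem isGcdMinors_iff {F : Matrix (Fin l) (Fin m) R} {d : R} :
    IsGcdMinors F k d ↔ Ideal.span (minorsSet F k) ≤ Ideal.span {d} ∧
      ∀ e : R, Ideal.span (minorsSet F k) ≤ Ideal.span {e} → e ∣ d := by
  simp only [IsGcdMinors, Ideal.span_le, Set.subset_def, SetLike.mem_coe,
    Ideal.mem_span_singleton]

theorem isGcdMinors_det (F : Matrix (Fin r) (Fin r) R) : IsGcdMinors F r F.det := by
  refine ⟨?_, fun e he => he _ ⟨.refl _, .refl _, rfl⟩⟩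
  rintro _ ⟨f, g, rfl⟩
  let ef := Equiv.ofBijective f (Finite.injective_iff_bijective.1 f.injective)
  let eg := Equiv.ofBijective g (Finite.injective_iff_bijective.1 g.injective)
  have hperm : F.submatrix f g = (F.submatrix id eg).submatrix ef id := rfl
  rw [hperm, det_permute, det_permute']
  exact (Dvd.intro_left _ rfl).mul_left _

theorem span_mul_reducedIdeal {F : Matrix (Fin l) (Fin m) R} {d : R}
    (hd : ∀ p ∈ minorsSet F k, d ∣ p) :
    Ideal.span {d} * reducedIdeal F k d = Ideal.span (minorsSet F k) := by
  rw [reducedIdeal, Ideal.span_mul_span', Set.singleton_mul]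
  refine congrArg Ideal.span (Set.Subset.antisymm (Set.image_subset_iff.2 fun _ => id) ?_)
  intro x hx
  obtain ⟨v, rfl⟩ := hd x hx
  exact ⟨v, hx, rfl⟩

theorem reducedIdeal_zero {F : Matrix (Fin l) (Fin m) R} (h0 : ∀ p ∈ minorsSet F k, (0 : R) ∣ p)
    (hl : k ≤ l) (hm : k ≤ m) : reducedIdeal F k 0 = ⊤ := by
  have hmem : (F.submatrix (Fin.castLEEmb hl) (Fin.castLEEmb hm)).det ∈ minorsSet F k :=
    ⟨_, _, rfl⟩
  rw [zero_dvd_iff.1 (h0 _ hmem)] at hmem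
  refine (Ideal.eq_top_iff_one _).2 (Ideal.subset_span ?_)
  rwa [Set.mem_ofPred_eq, zero_mul]

theorem reducedIdeal_congr [IsDomain R] {l' m' : ℕ} {F : Matrix (Fin l) (Fin m) R}
    {F' : Matrix (Fin l') (Fin m') R}
    (hspan : Ideal.span (minorsSet F k) = Ideal.span (minorsSet F' k))
    (hl : k ≤ l) (hm : k ≤ m) (hl' : k ≤ l') (hm' : k ≤ m') {d d' : R}
    (hd : IsGcdMinors F k d) (hd' : IsGcdMinors F' k d') :
    reducedIdeal F k d = reducedIdeal F' k d' := by
  have hdvd : d ∣ d' := (isGcdMinors_iff.1 hd').2 d (hspan ▸ (isGcdMinors_iff.1 hd).1)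
  have hdvd' : d' ∣ d := (isGcdMinors_iff.1 hd).2 d' (hspan ▸ (isGcdMinors_iff.1 hd').1)
  by_cases h0 : d = 0
  · obtain rfl := h0
    obtain rfl := zero_dvd_iff.1 hdvd
    rw [reducedIdeal_zero hd.1 hl hm, reducedIdeal_zero hd'.1 hl' hm']
  · refine (Ideal.span_singleton_mul_right_inj h0).1 ?_
    have hdd' : Ideal.span {d} = Ideal.span {d'} :=
      le_antisymm (Ideal.span_singleton_le_span_singleton.2 hdvd')
        (Ideal.span_singleton_le_span_singleton.2 hdvd)
    rw [span_mul_reducedIdeal hd.1, hdd', span_mul_reducedIdeal hd'.1, hspan]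

theorem mul_adjugate_submatrix_apply (F : Matrix (Fin l) (Fin m) R) (f : Fin r → Fin l)
    (g : Fin r → Fin m) (i : Fin l) (b : Fin r) :
    (F.submatrix id g * (F.submatrix f g).adjugate) i b =
      (F.submatrix (Function.update f b i) g).det := by
  have hcramer : (F.submatrix id g * (F.submatrix f g).adjugate) i b =
      cramer (F.submatrix f g)ᵀ (fun a => F i (g a)) b := by
    rw [cramer_eq_adjugate_mulVec, ← adjugate_transpose]
    simp [mul_apply, mulVec, dotProduct, mul_comm]
  rw [hcramer, cramer_transpose_apply]
  congr 1
  ext x y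
  by_cases hx : x = b
  · subst hx
    simp
  · simp [hx]

end Minors

section ColumnModule

variable {R : Type*} [CommRing R] [IsDomain R] {l m r : ℕ} {F : Matrix (Fin l) (Fin m) R}

theorem HasRank.mul_adjugate_mul (hF : HasRank F r) {f : Fin r → Fin l} {g : Fin r → Fin m}
    (hdet : (F.submatrix f g).det ≠ 0) :
    F.submatrix id g * (F.submatrix f g).adjugate * F.submatrix f id =
      (F.submatrix f g).det • F := by
  ext i j
  set A := F.submatrix f g
  set B : Matrix (Fin r) Unit R := of fun a _ => F (f a) j
  set C : Matrix Unit (Fin r) R := of fun _ a => F i (g a)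
  set D : Matrix Unit Unit R := of fun _ _ => F i j
  have hbordered : (fromBlocks A B C D).det = 0 := by
    let e : Fin (r + 1) ≃ Fin r ⊕ Unit := Fintype.equivOfCardEq (by simp)
    have hsub : (fromBlocks A B C D).submatrix e e =
        F.submatrix (Sum.elim f (fun _ => i) ∘ e) (Sum.elim g (fun _ => j) ∘ e) := by
      rw [← submatrix_submatrix]
      congr 1
      ext a b
      rcases a with a | a <;> rcases b with b | b <;> rfl
    have hmem := det_submatrix_mem_span_minorsSet F (Sum.elim f (fun _ => i) ∘ e)
      (Sum.elim g (fun _ => j) ∘ e)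
    rwa [hF.span_minorsSet_succ, Ideal.mem_bot, ← hsub, det_submatrix_equiv_self] at hmem
  have hschur : fromBlocks A B C D * fromBlocks 1 (-(A.adjugate * B)) 0 (A.det • 1) =
      fromBlocks A 0 C (A.det • D - C * A.adjugate * B) := by
    rw [fromBlocks_multiply]
    congr 1
    · simp
    · simp [← Matrix.mul_assoc, mul_adjugate]
    · simp
    · simp [← Matrix.mul_assoc, sub_eq_neg_add]
  have hprod := congrArg det hschur
  rw [det_mul, hbordered, zero_mul, det_fromBlocks_zero₁₂] at hprod
  have hzero := (mul_eq_zero.1 hprod.symm).resolve_left hdet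
  rw [det_unique] at hzero
  exact (sub_eq_zero.1 hzero).symm

theorem HasRank.exists_mul_eq_smul_of_mul_mem_minorsSet (hF : HasRank F r) {d v : R}
    (hd0 : d ≠ 0) (hd : ∀ p ∈ minorsSet F r, d ∣ p) (hv : d * v ∈ minorsSet F r) :
    ∃ (G : Matrix (Fin m) (Fin l) R) (E : Matrix (Fin l) (Fin l) R),
      F * G = d • E ∧ E * F = v • F := by
  obtain ⟨f, g, hfg⟩ := hv
  by_cases hv0 : v = 0
  · exact ⟨0, 0, by simp [hv0]⟩
  have hdvd : ∀ i b, d ∣ (F.submatrix id g * (F.submatrix f g).adjugate) i b := fun i b => by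
    rw [mul_adjugate_submatrix_apply]
    exact dvd_det_submatrix hd _ g
  choose Q hQ using hdvd
  have hQ : F.submatrix id g * (F.submatrix f g).adjugate = d • of Q := by
    ext i b
    exact hQ i b
  let S : Matrix (Fin m) (Fin r) R := submatrix 1 id g
  let T : Matrix (Fin r) (Fin l) R := submatrix 1 f id
  have hS : F * S = F.submatrix id g := mul_submatrix_one (.refl _) g F
  have hT : T * F = F.submatrix f id := one_submatrix_mul f (.refl _) F
  refine ⟨S * (F.submatrix f g).adjugate * T, of Q * T, ?_, smul_right_injective _ hd0 ?_⟩
  · rw [← Matrix.mul_assoc, ← Matrix.mul_assoc, hS, hQ, smul_mul]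
  · calc d • (of Q * T * F) = d • of Q * (T * F) := by rw [smul_mul, Matrix.mul_assoc]
      _ = F.submatrix id g * (F.submatrix f g).adjugate * F.submatrix f id := by rw [hQ, hT]
      _ = d • v • F := by
        rw [hF.mul_adjugate_mul (hfg ▸ mul_ne_zero hd0 hv0), ← hfg, mul_smul]

theorem HasRank.exists_mul_eq_smul_of_mem_reducedIdeal (hF : HasRank F r) {d v : R} (hd0 : d ≠ 0)
    (hd : ∀ p ∈ minorsSet F r, d ∣ p) (hv : v ∈ reducedIdeal F r d) :
    ∃ (G : Matrix (Fin m) (Fin l) R) (E : Matrix (Fin l) (Fin l) R),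
      F * G = d • E ∧ E * F = v • F := by
  induction hv using Submodule.span_induction with
  | mem v hv => exact hF.exists_mul_eq_smul_of_mul_mem_minorsSet hd0 hd hv
  | zero => exact ⟨0, 0, by simp⟩
  | add v w _ _ ihv ihw =>
    obtain ⟨G, E, hG, hE⟩ := ihv
    obtain ⟨G', E', hG', hE'⟩ := ihw
    exact ⟨G + G', E + E', by rw [Matrix.mul_add, hG, hG', smul_add],
      by rw [Matrix.add_mul, hE, hE', add_smul]⟩
  | smul a v _ ih =>
    obtain ⟨G, E, hG, hE⟩ := ih
    exact ⟨a • G, a • E, by rw [Matrix.mul_smul, hG, smul_comm],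
      by rw [smul_mul, hE, smul_eq_mul, mul_smul]⟩

theorem HasRank.exists_isIdempotentElem_mul_eq_self (hF : HasRank F r) {d : R} (hd0 : d ≠ 0)
    (hd : ∀ p ∈ minorsSet F r, d ∣ p) (htop : reducedIdeal F r d = ⊤) :
    ∃ (G : Matrix (Fin m) (Fin l) R) (E : Matrix (Fin l) (Fin l) R),
      F * G = d • E ∧ E * F = F ∧ IsIdempotentElem E := by
  obtain ⟨G, E, hG, hE⟩ :=
    hF.exists_mul_eq_smul_of_mem_reducedIdeal hd0 hd (htop ▸ Submodule.mem_top (x := 1))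
  rw [one_smul] at hE
  refine ⟨G, E, hG, hE, smul_right_injective _ hd0 ?_⟩
  change d • (E * E) = d • E
  rw [← Matrix.mul_smul, ← hG, ← Matrix.mul_assoc, hE]

end ColumnModule

section Splitting

variable {R : Type*} [CommRing R] {l m r s : ℕ}

theorem IsProjectiveFree.exists_mul_eq_of_isIdempotentElem (hR : IsProjectiveFree R)
    {E : Matrix (Fin l) (Fin l) R} (hE : IsIdempotentElem E) :
    ∃ (s : ℕ) (B : Matrix (Fin l) (Fin s) R) (C : Matrix (Fin s) (Fin l) R),
      C * B = 1 ∧ B * C = E := by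
  let Q := LinearMap.range E.mulVecLin
  let π : (Fin l → R) →ₗ[R] Q := E.mulVecLin.rangeRestrict
  have hπ : π ∘ₗ Q.subtype = LinearMap.id := by
    ext1 ⟨_, x, rfl⟩
    exact Subtype.ext (by simp [π, mulVec_mulVec, hE.eq])
  have : Module.Projective R Q := .of_split Q.subtype π hπ
  have : Module.Free R Q := hR Q
  obtain ⟨s, ⟨b⟩⟩ := exists_basis_fin R Q
  refine ⟨s, (Q.subtype ∘ₗ b.equivFun.symm.toLinearMap).toMatrix',
    (b.equivFun.toLinearMap ∘ₗ π).toMatrix', ?_, ?_⟩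
  · rw [← LinearMap.toMatrix'_comp, LinearMap.comp_assoc, ← LinearMap.comp_assoc _ _ π, hπ]
    simp
  · rw [← LinearMap.toMatrix'_comp, LinearMap.comp_assoc, ← LinearMap.comp_assoc π]
    simp only [LinearEquiv.comp_coe, LinearEquiv.self_trans_symm, LinearEquiv.refl_toLinearMap,
      LinearMap.id_comp]
    exact LinearMap.toMatrix'_toLin' E

theorem IsProjectiveFree.exists_isUnit_det_submatrix_eq [Nontrivial R] (hR : IsProjectiveFree R)
    (hsl : s ≤ l) {B : Matrix (Fin l) (Fin s) R} {C : Matrix (Fin s) (Fin l) R}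
    (hCB : C * B = 1) :
    ∃ U : Matrix (Fin l) (Fin l) R, IsUnit U.det ∧ U.submatrix id (Fin.castLE hsl) = B := by
  have hidem : IsIdempotentElem (B * C) := by
    rw [IsIdempotentElem, Matrix.mul_assoc, ← Matrix.mul_assoc C, hCB, Matrix.one_mul]
  obtain ⟨t, B', C', hCB', hBC'⟩ := hR.exists_mul_eq_of_isIdempotentElem hidem.one_sub
  have hzero : C * B' = 0 := by
    calc C * B' = C * (B' * C') * B' := by
          rw [Matrix.mul_assoc, Matrix.mul_assoc, hCB', Matrix.mul_one]
      _ = 0 := by rw [hBC', Matrix.mul_sub, ← Matrix.mul_assoc, hCB]; simp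
  have hzero' : C' * B = 0 := by
    calc C' * B = C' * (B' * C' * B) := by
          rw [← Matrix.mul_assoc, ← Matrix.mul_assoc, hCB', Matrix.one_mul]
      _ = 0 := by rw [hBC', Matrix.sub_mul, Matrix.mul_assoc B, hCB]; simp
  have hright : fromCols B B' * fromRows C C' = 1 := by
    rw [fromCols_mul_fromRows, hBC', add_sub_cancel]
  have hleft : fromRows C C' * fromCols B B' = 1 := by
    rw [fromRows_mul_fromCols, hCB, hCB', hzero, hzero', fromBlocks_one]
  obtain rfl : l = s + t := by simpa using square_of_invertible _ _ hright hleft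
  refine ⟨(fromCols B B').submatrix id finSumFinEquiv.symm, isUnit_det_of_right_inverse
    (B := (fromRows C C').submatrix finSumFinEquiv.symm id) ?_, ?_⟩
  · rw [submatrix_mul_equiv, hright, submatrix_id_id]
  · ext i j
    change fromCols B B' i (finSumFinEquiv.symm (Fin.castAdd t j)) = B i j
    rw [finSumFinEquiv_symm_apply_castAdd, fromCols_apply_inl]

/-- The matrix of size `l × m` with `F` in its upper left corner and zeros elsewhere. -/
def padZero (l m : ℕ) (F : Matrix (Fin r) (Fin r) R) : Matrix (Fin l) (Fin m) R :=
  of fun i j =>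
    if hi : (i : ℕ) < r then if hj : (j : ℕ) < r then F ⟨i, hi⟩ ⟨j, hj⟩ else 0 else 0

theorem padZero_eq_mul_mul (hl : r ≤ l) (hm : r ≤ m) (F : Matrix (Fin r) (Fin r) R) :
    padZero l m F = (1 : Matrix (Fin l) (Fin l) R).submatrix id (Fin.castLE hl) * F *
      (1 : Matrix (Fin m) (Fin m) R).submatrix (Fin.castLE hm) id := by
  ext i j
  by_cases hi : (i : ℕ) < r
  · obtain ⟨i, rfl⟩ : ∃ x, Fin.castLE hl x = i := ⟨⟨i, hi⟩, rfl⟩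
    by_cases hj : (j : ℕ) < r
    · obtain ⟨j, rfl⟩ : ∃ y, Fin.castLE hm y = j := ⟨⟨j, hj⟩, rfl⟩
      simp [padZero, mul_apply, one_apply]
    · have hne : ∀ y, Fin.castLE hm y ≠ j := fun y hy => hj (hy ▸ y.2)
      simp [padZero, mul_apply, one_apply, hj, hne]
  · have hne : ∀ x, i ≠ Fin.castLE hl x := fun x hx => hi (hx ▸ x.2)
    simp [padZero, mul_apply, one_apply, hi, hne]

theorem mul_padZero_mul (hl : r ≤ l) (hm : r ≤ m) (U : Matrix (Fin l) (Fin l) R)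
    (F : Matrix (Fin r) (Fin r) R) (V : Matrix (Fin m) (Fin m) R) :
    U * padZero l m F * V =
      U.submatrix id (Fin.castLE hl) * F * V.submatrix (Fin.castLE hm) id := by
  have hU : U * submatrix (1 : Matrix (Fin l) (Fin l) R) id (Fin.castLE hl) =
      U.submatrix id (Fin.castLE hl) :=
    mul_submatrix_one (.refl _) _ U
  have hV : submatrix (1 : Matrix (Fin m) (Fin m) R) (Fin.castLE hm) id * V =
      V.submatrix (Fin.castLE hm) id :=
    one_submatrix_mul _ (.refl _) V
  rw [padZero_eq_mul_mul hl hm, ← Matrix.mul_assoc, ← Matrix.mul_assoc, hU, Matrix.mul_assoc, hV]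

theorem IsProjectiveFree.exists_mul_mul_eq_self [IsDomain R] (hR : IsProjectiveFree R)
    {F : Matrix (Fin l) (Fin m) R} (hF : HasRank F r) (hJ : JkUnit F r) :
    ∃ (B : Matrix (Fin l) (Fin r) R) (C : Matrix (Fin r) (Fin l) R),
      C * B = 1 ∧ B * C * F = F := by
  obtain ⟨d, hd, htop⟩ := hJ
  have hd0 : d ≠ 0 := by
    rintro rfl
    obtain ⟨p, hp, hp0⟩ := hF.1
    exact hp0 (zero_dvd_iff.1 (hd.1 p hp))
  obtain ⟨G, E, hFG, hEF, hEE⟩ := hF.exists_isIdempotentElem_mul_eq_self hd0 hd.1 htop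
  obtain ⟨s, B, C, hCB, rfl⟩ := hR.exists_mul_eq_of_isIdempotentElem hEE
  have hrs : r ≤ s := hF.le_of_eq_mul (hEF.symm.trans (Matrix.mul_assoc B C F))
  have hsr : s ≤ r := by
    refine hF.le_of_mul_mul_eq_smul_one hd0 (C := C) (D := G * B) ?_
    rw [Matrix.mul_assoc, ← Matrix.mul_assoc F, hFG, smul_mul, Matrix.mul_smul, Matrix.mul_assoc,
      hCB, Matrix.mul_one, hCB]
  obtain rfl := hsr.antisymm hrs
  exact ⟨B, C, hCB, hEF⟩

theorem IsProjectiveFree.exists_matEquiv_padZero [IsDomain R] (hR : IsProjectiveFree R)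
    {F : Matrix (Fin l) (Fin m) R} (hF : HasRank F r) (hJ : JkUnit F r) :
    ∃ F₁ : Matrix (Fin r) (Fin r) R, MatEquiv F (padZero l m F₁) ∧
      ∀ k, Ideal.span (minorsSet F k) = Ideal.span (minorsSet F₁ k) := by
  obtain ⟨B, C, hCB, hBCF⟩ := hR.exists_mul_mul_eq_self hF hJ
  obtain ⟨B', C', hCB', hBCF'⟩ := hR.exists_mul_mul_eq_self hF.transpose hJ.transpose
  obtain ⟨U, hU, hUB⟩ := hR.exists_isUnit_det_submatrix_eq hF.le_height hCB
  obtain ⟨V, hV, hVB⟩ := hR.exists_isUnit_det_submatrix_eq hF.le_width hCB'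
  have hFCB : F * (C'ᵀ * B'ᵀ) = F := by
    rw [← transpose_mul, ← transpose_inj, transpose_mul, transpose_transpose, hBCF']
  have hfactor : F = B * (C * F * C'ᵀ) * B'ᵀ := by
    calc F = B * C * (F * (C'ᵀ * B'ᵀ)) := by rw [hFCB, hBCF]
      _ = B * (C * F * C'ᵀ) * B'ᵀ := by simp only [Matrix.mul_assoc]
  refine ⟨C * F * C'ᵀ, ⟨U, Vᵀ, hU, V.isUnit_det_transpose hV, ?_⟩, fun k =>
    le_antisymm ?_ (span_minorsSet_mul_mul_le _ _ _)⟩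
  · rwa [mul_padZero_mul hF.le_height hF.le_width, ← transpose_submatrix, hUB, hVB]
  · conv_lhs => rw [hfactor]
    exact span_minorsSet_mul_mul_le _ _ _

end Splitting

theorem statement16_general {R : Type*} [CommRing R] [IsDomain R] (hR : IsProjectiveFree R)
    {l m r : ℕ} (F : Matrix (Fin l) (Fin m) R) (hrank : HasRank F r) (hJr : JkUnit F r) :
    ∃ F₁ : Matrix (Fin r) (Fin r) R, MatEquiv F (padZero l m F₁) ∧ IsGcdMinors F r F₁.det ∧
      ∀ k ≤ r, ∀ d d' : R, IsGcdMinors F k d → IsGcdMinors F₁ k d' →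
        reducedIdeal F₁ k d' = reducedIdeal F k d := by
  obtain ⟨F₁, hequiv, hspan⟩ := hR.exists_matEquiv_padZero hrank hJr
  refine ⟨F₁, hequiv, ?_, fun k hk d d' hd hd' => ?_⟩
  · rw [isGcdMinors_iff, hspan, ← isGcdMinors_iff]
    exact isGcdMinors_det F₁
  · exact reducedIdeal_congr (hspan k).symm hk hk (hk.trans hrank.le_height)
      (hk.trans hrank.le_width) hd' hd

/-- The conclusion asserts the existence of `F'₁ ∈ R^{r×r}` such that `F` is
equivalent to the `l × m` block matrix with `F'₁` in the upper-left corner and zeros elsewhere,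
`det F'₁` is a gcd of the `r × r` minors of `F` (i.e. is associated to `d_r(F)`), and for each
`k = 1, …, r` the ideals of reduced minors coincide: `J_k(F'₁) = J_k(F)`. -/
theorem statement16 {K : Type*} [Field K] (n : ℕ) (hn : 2 ≤ n) (l m r : ℕ) (hlm : l < m)
    (hr1 : 1 ≤ r) (hrl : r ≤ l)
    (F : Matrix (Fin l) (Fin m) (MvPolynomial (Fin n) K))
    (hrank : HasRank F r)
    (hJr : JkUnit F r) :
    ∃ F'₁ : Matrix (Fin r) (Fin r) (MvPolynomial (Fin n) K),
      MatEquiv F (Matrix.of fun i : Fin l => fun j : Fin m =>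
        if hi : (i : ℕ) < r then
          if hj : (j : ℕ) < r then F'₁ ⟨(i : ℕ), hi⟩ ⟨(j : ℕ), hj⟩ else 0
        else 0) ∧
      IsGcdMinors F r F'₁.det ∧
      (∀ k : ℕ, 1 ≤ k → k ≤ r →
        ∀ d d' : MvPolynomial (Fin n) K, IsGcdMinors F k d → IsGcdMinors F'₁ k d' →
          reducedIdeal F'₁ k d' = reducedIdeal F k d) := by
  obtain ⟨F₁, hequiv, hdet, hreduced⟩ :=
    statement16_general (isProjectiveFree_mvPolynomial K n) F hrank hJr
  exact ⟨F₁, hequiv, hdet, fun k _ => hreduced k⟩
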